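/- For any state x : V → ℝ, writing x_ave = N⁻¹ Σ_{u∈V} x_u and d = N⁻¹ Σ_{u∈V} (x_u − x_ave)², the following deterministic inequality holds: N⁻¹ Σ_{v∈V} ( (q/N) Σ_{u∈N⁺_v} (x_v − x_u) )² ≤ 4 · (q² · deg_max² / N²) · d. -/

import Mathlib

/-- For any state `x : V → ℝ`, with `x_ave = N⁻¹ Σ_u x_u` and
`d = N⁻¹ Σ_u (x_u − x_ave)²`, the deterministic inequality
`N⁻¹ Σ_v ((q/N) Σ_{u∈N⁺_v} (x_v − x_u))² ≤ 4 q² deg_max² d / N²` holds. -/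
theorem bga_increment_variance_bound
    {V : Type*} [Fintype V] [DecidableEq V] [Nonempty V]
    (Nplus Nminus : V → Finset V)
    (hadj : ∀ u v : V, u ∈ Nplus v ↔ v ∈ Nminus u)
    (q : ℝ) (hq0 : 0 < q) (hq1 : q < 1)
    (degMax : ℕ)
    (hdeg : degMax = max (Finset.univ.sup fun w => (Nplus w).card)
                         (Finset.univ.sup fun w => (Nminus w).card))
    (x : V → ℝ) (xave d : ℝ)
    (hxave : xave = (Fintype.card V : ℝ)⁻¹ * ∑ u, x u)
    (hd : d = (Fintype.card V : ℝ)⁻¹ * ∑ u, (x u - xave) ^ 2) :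
    (Fintype.card V : ℝ)⁻¹ *
        ∑ v, (q / (Fintype.card V : ℝ) * ∑ u ∈ Nplus v, (x v - x u)) ^ 2 ≤
      4 * (q ^ 2 * (degMax : ℝ) ^ 2 / (Fintype.card V : ℝ) ^ 2) * d := by
  have hp : ∀ v, ((Nplus v).card : ℝ) ≤ degMax := by
    intro v
    have h : (Nplus v).card ≤ Finset.univ.sup fun w => (Nplus w).card :=
      Finset.le_sup (f := fun w => (Nplus w).card) (Finset.mem_univ v)
    exact_mod_cast hdeg ▸ h.trans (le_max_left _ _)
  have hm : ∀ v, ((Nminus v).card : ℝ) ≤ degMax := by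
    intro v
    have h : (Nminus v).card ≤ Finset.univ.sup fun w => (Nminus w).card :=
      Finset.le_sup (f := fun w => (Nminus w).card) (Finset.mem_univ v)
    exact_mod_cast hdeg ▸ h.trans (le_max_right _ _)
  have hD : (0 : ℝ) ≤ degMax := Nat.cast_nonneg _
  have h1 : ∀ v, (∑ u ∈ Nplus v, (x v - x u)) ^ 2 ≤
      (degMax : ℝ) * ∑ u ∈ Nplus v, (2 * (x v - xave) ^ 2 + 2 * (x u - xave) ^ 2) := by
    intro v
    refine (sq_sum_le_card_mul_sum_sq).trans ?_
    refine mul_le_mul (hp v) ?_ (Finset.sum_nonneg fun _ _ => sq_nonneg _) hD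
    refine Finset.sum_le_sum fun u _ => ?_
    nlinarith [sq_nonneg ((x v - xave) + (x u - xave))]
  have h2 : ∑ v, ∑ u ∈ Nplus v, 2 * (x u - xave) ^ 2 =
      ∑ u, ∑ v ∈ Nminus u, 2 * (x u - xave) ^ 2 := by
    apply Finset.sum_comm'
    intro a b
    simp [hadj b a]
  have h3 : ∑ v, ∑ u ∈ Nplus v, (2 * (x v - xave) ^ 2 + 2 * (x u - xave) ^ 2) ≤
      4 * degMax * ∑ u, (x u - xave) ^ 2 := by
    simp only [Finset.sum_add_distrib]
    rw [h2, ← Finset.sum_add_distrib, Finset.mul_sum]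
    refine Finset.sum_le_sum fun u _ => ?_
    simp only [Finset.sum_const, nsmul_eq_mul]
    nlinarith [mul_le_mul_of_nonneg_right (hp u) (sq_nonneg (x u - xave)),
      mul_le_mul_of_nonneg_right (hm u) (sq_nonneg (x u - xave))]
  have h4 : ∑ v, (∑ u ∈ Nplus v, (x v - x u)) ^ 2 ≤
      degMax * (4 * degMax * ∑ u, (x u - xave) ^ 2) := by
    refine (Finset.sum_le_sum fun v _ => h1 v).trans ?_
    rw [← Finset.mul_sum]
    exact mul_le_mul_of_nonneg_left h3 hD
  simp only [mul_pow]
  rw [← Finset.mul_sum, hd]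
  calc _ ≤ (Fintype.card V : ℝ)⁻¹ * ((q / (Fintype.card V : ℝ)) ^ 2 *
        (degMax * (4 * degMax * ∑ u, (x u - xave) ^ 2))) := by gcongr
    _ = _ := by ring
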